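/- Every tempered distribution T ∈ 𝒮'(ℝ) can be written as T = ∂^m f for some m ∈ ℕ and some continuous slowly increasing function f (i.e., f continuous with |f(x)| ≤ k + |x|^k for some k), where ∂ is the distributional derivative. -/

import Mathlib

/-!
A Schwartz seminorm of `φ` is at most a weighted sup norm of one derivative, which is at most a
weighted `L¹` norm of the next derivative and hence, by Cauchy–Schwarz, a weighted `L²` norm of it;
each step only costs powers of the weight `1 + x²`. So continuity of `T` factors it through
`φ ↦ (1 + x²)ᵏ φ⁽ᵐ⁾` into `L²`, and the Riesz representation theorem exhibits `T` as
`φ ↦ ∫ ⟪v, φ⁽ᵐ⁾⟫` with `v` integrable against a power of `(1 + x²)⁻¹`. The primitive of `v` from `0`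
is continuous and slowly increasing, and one integration by parts finishes the proof. Since `v` is
only measurable, that integration by parts is Fubini's theorem.
-/

open MeasureTheory Set SchwartzMap
open scoped InnerProductSpace

section WeightedEstimates

variable {F : Type*} [NormedAddCommGroup F] [NormedSpace ℝ F]

lemma one_add_sq_pow_le_of_abs_le (k : ℕ) {x t : ℝ} (h : |x| ≤ |t|) :
    (1 + x ^ 2) ^ k ≤ (1 + t ^ 2) ^ k := by
  have := sq_le_sq.mpr h
  gcongr

lemma integrable_one_add_sq_pow_mul_norm (k : ℕ) (f : 𝓢(ℝ, F)) :
    Integrable fun x ↦ (1 + x ^ 2) ^ k * ‖f x‖ := by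
  have hw : Function.HasTemperateGrowth fun x : ℝ ↦ (1 + x ^ 2) ^ k := by fun_prop
  refine (smulLeftCLM F (fun x : ℝ ↦ (1 + x ^ 2) ^ k) f).integrable.norm.congr
    (.of_forall fun x ↦ ?_)
  simp only [smulLeftCLM_apply_apply hw, norm_smul, norm_pow]
  rw [Real.norm_of_nonneg (by positivity)]

lemma integrable_one_add_sq_pow_mul_norm_deriv (k : ℕ) (f : 𝓢(ℝ, F)) :
    Integrable fun x ↦ (1 + x ^ 2) ^ k * ‖deriv f x‖ :=
  integrable_one_add_sq_pow_mul_norm k (derivCLM ℝ F f)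

lemma coe_derivCLM_pow (𝕜 : Type*) [RCLike 𝕜] [NormedSpace 𝕜 F] (m : ℕ) (f : 𝓢(ℝ, F)) :
    ⇑((derivCLM 𝕜 F ^ m) f) = iteratedDeriv m f := by
  induction m with
  | zero => simp
  | succ m ih => rw [pow_succ', iteratedDeriv_succ, ← ih]; rfl

lemma one_add_sq_pow_mul_norm_setIntegral_deriv_le (k : ℕ) (f : 𝓢(ℝ, F)) {x : ℝ} {s : Set ℝ}
    (hs : MeasurableSet s) (hxs : ∀ t ∈ s, |x| ≤ |t|) :
    (1 + x ^ 2) ^ k * ‖∫ t in s, deriv f t‖ ≤ ∫ t, (1 + t ^ 2) ^ k * ‖deriv f t‖ := by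
  have hint := integrable_one_add_sq_pow_mul_norm_deriv k f
  calc (1 + x ^ 2) ^ k * ‖∫ t in s, deriv f t‖
      ≤ (1 + x ^ 2) ^ k * ∫ t in s, ‖deriv f t‖ := by
        gcongr; exact norm_integral_le_integral_norm _
    _ = ∫ t in s, (1 + x ^ 2) ^ k * ‖deriv f t‖ := by rw [integral_const_mul]
    _ ≤ ∫ t in s, (1 + t ^ 2) ^ k * ‖deriv f t‖ := by
        refine setIntegral_mono_on ((derivCLM ℝ F f).integrable.norm.const_mul _).integrableOn
          hint.integrableOn hs fun t ht ↦ ?_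
        gcongr ?_ * _
        exact one_add_sq_pow_le_of_abs_le k (hxs t ht)
    _ ≤ ∫ t, (1 + t ^ 2) ^ k * ‖deriv f t‖ :=
        setIntegral_le_integral hint (.of_forall fun t ↦ by positivity)

variable [CompleteSpace F]

lemma integral_Ioi_deriv_schwartz (f : 𝓢(ℝ, F)) (x : ℝ) : ∫ t in Ioi x, deriv f t = -f x := by
  rw [integral_Ioi_of_hasDerivAt_of_tendsto' (fun t _ ↦ f.hasDerivAt t)
    (derivCLM ℝ F f).integrable.integrableOn
    ((zero_at_infty f).mono_left atTop_le_cocompact), zero_sub]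

lemma integral_Iic_deriv_schwartz (f : 𝓢(ℝ, F)) (x : ℝ) : ∫ t in Iic x, deriv f t = f x := by
  rw [integral_Iic_of_hasDerivAt_of_tendsto' (fun t _ ↦ f.hasDerivAt t)
    (derivCLM ℝ F f).integrable.integrableOn
    ((zero_at_infty f).mono_left atBot_le_cocompact), sub_zero]

/- Integrating from the infinity on the side of `x`, where the weight is at least its value at
`x`, avoids any loss in the exponent. -/
lemma one_add_sq_pow_mul_norm_le_integral_deriv (k : ℕ) (f : 𝓢(ℝ, F)) (x : ℝ) :
    (1 + x ^ 2) ^ k * ‖f x‖ ≤ ∫ t, (1 + t ^ 2) ^ k * ‖deriv f t‖ := by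
  rcases le_total 0 x with hx | hx
  · rw [← norm_neg, ← integral_Ioi_deriv_schwartz]
    exact one_add_sq_pow_mul_norm_setIntegral_deriv_le k f measurableSet_Ioi
      fun t ht ↦ abs_le_abs_of_nonneg hx (mem_Ioi.mp ht).le
  · rw [← integral_Iic_deriv_schwartz]
    exact one_add_sq_pow_mul_norm_setIntegral_deriv_le k f measurableSet_Iic
      fun t ht ↦ abs_le_abs_of_nonpos hx ht

lemma integral_one_add_sq_pow_mul_norm_le_deriv (k : ℕ) (f : 𝓢(ℝ, F)) :
    ∫ x, (1 + x ^ 2) ^ k * ‖f x‖ ≤ Real.pi * ∫ x, (1 + x ^ 2) ^ (k + 1) * ‖deriv f x‖ := by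
  rw [← integral_univ_inv_one_add_sq, ← integral_mul_const]
  refine integral_mono (integrable_one_add_sq_pow_mul_norm k f)
    (integrable_inv_one_add_sq.mul_const _) fun x ↦ ?_
  have h := one_add_sq_pow_mul_norm_le_integral_deriv (k + 1) f x
  rw [pow_succ', mul_assoc] at h
  exact (le_inv_mul_iff₀ (by positivity)).mpr h

lemma integral_one_add_sq_pow_mul_norm_iteratedDeriv_le (k n d : ℕ) (f : 𝓢(ℝ, F)) :
    ∫ x, (1 + x ^ 2) ^ k * ‖iteratedDeriv n f x‖ ≤
      Real.pi ^ d * ∫ x, (1 + x ^ 2) ^ (k + d) * ‖iteratedDeriv (n + d) f x‖ := by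
  induction d with
  | zero => simp
  | succ d ih =>
    refine ih.trans ?_
    rw [pow_succ, mul_assoc, ← add_assoc, ← add_assoc]
    gcongr
    simpa only [iteratedDeriv_succ, coe_derivCLM_pow] using
      integral_one_add_sq_pow_mul_norm_le_deriv (k + d) ((derivCLM ℝ F ^ (n + d)) f)

lemma seminorm_le_integral_iteratedDeriv (𝕜 : Type*) [NormedField 𝕜] [NormedSpace 𝕜 F]
    [SMulCommClass ℝ 𝕜 F] {k n K N : ℕ} (hk : k ≤ K) (hn : n ≤ N) (f : 𝓢(ℝ, F)) :
    SchwartzMap.seminorm 𝕜 k n f ≤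
      Real.pi ^ N * ∫ x, (1 + x ^ 2) ^ (K + N) * ‖iteratedDeriv (N + 1) f x‖ := by
  refine seminorm_le_bound' 𝕜 k n f (by positivity) fun x ↦ ?_
  have hweight : |x| ^ k ≤ (1 + x ^ 2) ^ (K + n) :=
    calc |x| ^ k ≤ (1 + x ^ 2) ^ k := by
          gcongr
          nlinarith [sq_abs x, sq_nonneg (|x| - 1)]
      _ ≤ (1 + x ^ 2) ^ (K + n) :=
          pow_le_pow_right₀ (by linarith [sq_nonneg x]) (hk.trans (Nat.le_add_right K n))
  have hpi : Real.pi ^ (N - n) ≤ Real.pi ^ N :=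
    pow_le_pow_right₀ (by linarith [Real.pi_gt_three]) (Nat.sub_le N n)
  calc |x| ^ k * ‖iteratedDeriv n f x‖
      ≤ (1 + x ^ 2) ^ (K + n) * ‖iteratedDeriv n f x‖ := by gcongr
    _ ≤ ∫ t, (1 + t ^ 2) ^ (K + n) * ‖iteratedDeriv (n + 1) f t‖ := by
        simpa only [iteratedDeriv_succ, coe_derivCLM_pow] using
          one_add_sq_pow_mul_norm_le_integral_deriv (K + n) ((derivCLM ℝ F ^ n) f) x
    _ ≤ Real.pi ^ (N - n) * ∫ t, (1 + t ^ 2) ^ (K + n + (N - n)) *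
          ‖iteratedDeriv (n + 1 + (N - n)) f t‖ :=
        integral_one_add_sq_pow_mul_norm_iteratedDeriv_le _ _ _ f
    _ ≤ Real.pi ^ N * ∫ t, (1 + t ^ 2) ^ (K + N) * ‖iteratedDeriv (N + 1) f t‖ := by
        rw [show K + n + (N - n) = K + N by lia, show n + 1 + (N - n) = N + 1 by lia]
        gcongr

end WeightedEstimates

section L2

lemma integral_mul_norm_le_norm_mul_norm {α E : Type*} [MeasurableSpace α] {μ : Measure α}
    [NormedAddCommGroup E] {a : α → ℝ} (ha : MemLp a 2 μ) (g : Lp E 2 μ) :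
    ∫ x, a x * ‖g x‖ ∂μ ≤ ‖ha.toLp‖ * ‖g‖ := by
  have hg := (Lp.memLp g).norm
  calc ∫ x, a x * ‖g x‖ ∂μ = ⟪ha.toLp, hg.toLp⟫_ℝ := by
        rw [L2.inner_def]
        refine integral_congr_ae ?_
        filter_upwards [ha.coeFn_toLp, hg.coeFn_toLp] with x hax hgx
        simp [hax, hgx, mul_comm]
    _ ≤ ‖ha.toLp‖ * ‖hg.toLp‖ := real_inner_le_norm _ _
    _ = ‖ha.toLp‖ * ‖g‖ := by rw [Lp.norm_toLp _ hg, eLpNorm_norm, ← Lp.norm_def]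

lemma memLp_two_inv_one_add_sq : MemLp (fun x : ℝ ↦ (1 + x ^ 2)⁻¹) 2 := by
  have hcont : Continuous fun x : ℝ ↦ (1 + x ^ 2)⁻¹ :=
    Continuous.inv₀ (by fun_prop) fun x ↦ by positivity
  refine (memLp_two_iff_integrable_sq hcont.aestronglyMeasurable).mpr <|
    integrable_inv_one_add_sq.mono' (hcont.pow 2).aestronglyMeasurable (.of_forall fun x ↦ ?_)
  rw [Real.norm_of_nonneg (by positivity)]
  exact pow_le_of_le_one (by positivity) (inv_le_one_of_one_le₀ (by nlinarith)) two_ne_zero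

lemma exists_eq_inner_of_norm_le {𝕜 V H : Type*} [RCLike 𝕜] [AddCommGroup V] [Module 𝕜 V]
    [NormedAddCommGroup H] [InnerProductSpace 𝕜 H] [CompleteSpace H] (A : V →ₗ[𝕜] H)
    (T : V →ₗ[𝕜] 𝕜) {C : ℝ} (hT : ∀ v, ‖T v‖ ≤ C * ‖A v‖) : ∃ g : H, ∀ v, T v = ⟪g, A v⟫_𝕜 := by
  have hker : A.ker ≤ T.ker := fun v hv ↦ by
    have h := hT v
    rw [LinearMap.mem_ker.mp hv, norm_zero, mul_zero] at h
    exact norm_le_zero_iff.mp h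
  obtain ⟨ℓ, hℓ⟩ : T ∈ A.dualMap.range := by
    rw [LinearMap.range_dualMap_eq_dualAnnihilator_ker, Submodule.mem_dualAnnihilator]
    exact hker
  have hℓA (v : V) : ℓ (A v) = T v := DFunLike.congr_fun hℓ v
  have hbound : ∀ y : A.range, ‖ℓ.domRestrict A.range y‖ ≤ C * ‖y‖ := by
    rintro ⟨_, v, rfl⟩
    simpa only [LinearMap.domRestrict_apply, hℓA, Submodule.coe_norm] using hT v
  obtain ⟨Λ, hΛ, -⟩ := exists_extension_norm_eq A.range
    ((ℓ.domRestrict A.range).mkContinuous C hbound)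
  refine ⟨(InnerProductSpace.toDual 𝕜 H).symm Λ, fun v ↦ ?_⟩
  rw [InnerProductSpace.toDual_symm_apply, ← hℓA]
  exact (hΛ ⟨A v, v, rfl⟩).symm

variable (𝕜 : Type*) {E : Type*} [RCLike 𝕜] [NormedAddCommGroup E] [NormedSpace ℝ E]

/-- The map `φ ↦ (1 + x²)ᵏ φ⁽ᵐ⁾` from the Schwartz space to `L²`. Pulling the `L²` norm back along
it gives, for varying `k` and `m`, seminorms that dominate every Schwartz seminorm. The weight is
cast to `𝕜` only so that the map is `𝕜`-linear by construction. -/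
noncomputable def weightedDerivL2 [NormedSpace 𝕜 E] (k m : ℕ) :
    𝓢(ℝ, E) →L[𝕜] Lp E 2 (volume : Measure ℝ) :=
  toLpCLM 𝕜 E 2 volume ∘L smulLeftCLM E (fun x : ℝ ↦ (((1 + x ^ 2) ^ k : ℝ) : 𝕜)) ∘L
    derivCLM 𝕜 E ^ m

lemma coeFn_weightedDerivL2 [NormedSpace 𝕜 E] (k m : ℕ) (φ : 𝓢(ℝ, E)) :
    weightedDerivL2 𝕜 k m φ =ᵐ[volume] fun x ↦ (1 + x ^ 2) ^ k • iteratedDeriv m φ x := by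
  have hw : Function.HasTemperateGrowth fun x : ℝ ↦ (1 + x ^ 2) ^ k := by fun_prop
  refine (coeFn_toLp _ 2 volume).trans (.of_forall fun x ↦ ?_)
  change smulLeftCLM E _ ((derivCLM 𝕜 E ^ m) φ) x = _
  rw [smulLeftCLM_ofReal 𝕜 hw, smulLeftCLM_apply_apply hw, coe_derivCLM_pow]

lemma integral_iteratedDeriv_le_norm_weightedDerivL2 [NormedSpace 𝕜 E] (k m : ℕ) (φ : 𝓢(ℝ, E)) :
    ∫ x, (1 + x ^ 2) ^ k * ‖iteratedDeriv m φ x‖ ≤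
      ‖memLp_two_inv_one_add_sq.toLp‖ * ‖weightedDerivL2 𝕜 (k + 1) m φ‖ := by
  refine le_of_eq_of_le (integral_congr_ae ?_)
    (integral_mul_norm_le_norm_mul_norm memLp_two_inv_one_add_sq _)
  filter_upwards [coeFn_weightedDerivL2 𝕜 (k + 1) m φ] with x hx
  have : 1 + x ^ 2 ≠ 0 := by positivity
  rw [hx, norm_smul, Real.norm_of_nonneg (by positivity)]
  field_simp
  ring

lemma exists_norm_le_weightedDerivL2 [NormedSpace 𝕜 E] [CompleteSpace E] {G : Type*}
    [NormedAddCommGroup G] [NormedSpace 𝕜 G] (T : 𝓢(ℝ, E) →L[𝕜] G) :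
    ∃ (k m : ℕ) (C : ℝ), ∀ φ, ‖T φ‖ ≤ C * ‖weightedDerivL2 𝕜 k m φ‖ := by
  obtain ⟨s, C, -, hC⟩ := Seminorm.bound_of_continuous (schwartz_withSeminorms 𝕜 ℝ E)
    ((normSeminorm 𝕜 G).comp T.toLinearMap) (continuous_norm.comp T.continuous)
  set K := s.sup Prod.fst
  set N := s.sup Prod.snd
  refine ⟨K + N + 1, N + 1, C * (Real.pi ^ N * ‖memLp_two_inv_one_add_sq.toLp‖), fun φ ↦ ?_⟩
  calc ‖T φ‖ ≤ C * s.sup (schwartzSeminormFamily 𝕜 ℝ E) φ := hC φ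
    _ ≤ C * (Real.pi ^ N * ∫ x, (1 + x ^ 2) ^ (K + N) * ‖iteratedDeriv (N + 1) φ x‖) := by
        gcongr
        exact Seminorm.finset_sup_apply_le (by positivity) fun i hi ↦
          seminorm_le_integral_iteratedDeriv 𝕜 (Finset.le_sup (f := Prod.fst) hi)
            (Finset.le_sup (f := Prod.snd) hi) φ
    _ ≤ C * (Real.pi ^ N * (‖memLp_two_inv_one_add_sq.toLp‖ *
          ‖weightedDerivL2 𝕜 (K + N + 1) (N + 1) φ‖)) := by
        gcongr
        exact integral_iteratedDeriv_le_norm_weightedDerivL2 𝕜 _ _ φ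
    _ = _ := by ring

end L2

section Inner

variable {𝕜 E : Type*} [RCLike 𝕜] [NormedAddCommGroup E] [InnerProductSpace 𝕜 E] [NormedSpace ℝ E]
  [CompleteSpace E]

theorem exists_eq_integral_inner_iteratedDeriv (T : 𝓢(ℝ, E) →L[𝕜] 𝕜) :
    ∃ (k m : ℕ) (v : ℝ → E), Integrable (fun x ↦ ((1 + x ^ 2) ^ k)⁻¹ • v x) ∧
      ∀ φ : 𝓢(ℝ, E), T φ = ∫ x, ⟪v x, iteratedDeriv m φ x⟫_𝕜 := by
  obtain ⟨k, m, C, hC⟩ := exists_norm_le_weightedDerivL2 𝕜 T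
  obtain ⟨g, hg⟩ := exists_eq_inner_of_norm_le (weightedDerivL2 𝕜 k m).toLinearMap T.toLinearMap hC
  refine ⟨k + 1, m, fun x ↦ (1 + x ^ 2) ^ k • g x, ?_, fun φ ↦ ?_⟩
  · have hint := memLp_one_iff_integrable.mp ((Lp.memLp g).smul memLp_two_inv_one_add_sq)
    refine hint.congr (.of_forall fun x ↦ ?_)
    have : 1 + x ^ 2 ≠ 0 := by positivity
    simp only [smul_smul, Pi.smul_apply']
    congr 1
    field_simp
    ring
  · refine (hg φ).trans ((L2.inner_def _ _).trans (integral_congr_ae ?_))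
    filter_upwards [coeFn_weightedDerivL2 𝕜 k m φ] with x hx
    rw [ContinuousLinearMap.coe_coe, hx, inner_smul_left_eq_smul, inner_smul_right_eq_smul]

end Inner

section Primitive

/-- The indicator of the oriented interval from `0` to `t`: it is `1` on `(0, t]` and `-1` on
`(t, 0]`. It is the kernel that turns the primitive `∫ x in 0..t, v x` into an integral over `ℝ`. -/
noncomputable def orientedIndicator (t x : ℝ) : ℝ :=
  (Ioc 0 t).indicator 1 x - (Ioc t 0).indicator 1 x

lemma measurable_orientedIndicator : Measurable (Function.uncurry orientedIndicator) := by
  have hpos : MeasurableSet {p : ℝ × ℝ | p.2 ∈ Ioc 0 p.1} :=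
    (measurableSet_lt measurable_const measurable_snd).inter
      (measurableSet_le measurable_snd measurable_fst)
  have hneg : MeasurableSet {p : ℝ × ℝ | p.2 ∈ Ioc p.1 0} :=
    (measurableSet_lt measurable_fst measurable_snd).inter
      (measurableSet_le measurable_snd measurable_const)
  exact (measurable_one.indicator hpos).sub (measurable_one.indicator hneg)

lemma abs_orientedIndicator_mul_le (k : ℕ) (t x : ℝ) :
    |orientedIndicator t x| * (1 + x ^ 2) ^ k ≤ (1 + t ^ 2) ^ k := by
  have hpos : 0 ≤ (1 + t ^ 2) ^ k := by positivity
  unfold orientedIndicator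
  by_cases h₁ : x ∈ Ioc 0 t
  · have := one_add_sq_pow_le_of_abs_le k (abs_le_abs_of_nonneg h₁.1.le h₁.2)
    simpa [h₁, h₁.1.not_ge]
  · by_cases h₂ : x ∈ Ioc t 0
    · have := one_add_sq_pow_le_of_abs_le k (abs_le_abs_of_nonpos h₂.2 h₂.1.le)
      simpa [h₁, h₂]
    · simpa [h₁, h₂]

variable {F : Type*} [NormedAddCommGroup F] [NormedSpace ℝ F] {v : ℝ → F}

lemma orientedIndicator_smul (v : ℝ → F) (t x : ℝ) :
    orientedIndicator t x • v x = (Ioc 0 t).indicator v x - (Ioc t 0).indicator v x := by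
  simp only [orientedIndicator, sub_smul, ← indicator_smul_apply_left, Pi.one_apply, one_smul]

lemma integrable_orientedIndicator_smul {t : ℝ} (hv : IntervalIntegrable v volume 0 t) :
    Integrable fun x ↦ orientedIndicator t x • v x := by
  simp_rw [orientedIndicator_smul]
  exact (hv.1.integrable_indicator measurableSet_Ioc).sub
    (hv.2.integrable_indicator measurableSet_Ioc)

lemma integral_orientedIndicator_smul {t : ℝ} (hv : IntervalIntegrable v volume 0 t) :
    ∫ x, orientedIndicator t x • v x = ∫ x in 0..t, v x := by
  simp_rw [orientedIndicator_smul]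
  rw [integral_sub (hv.1.integrable_indicator measurableSet_Ioc)
    (hv.2.integrable_indicator measurableSet_Ioc), integral_indicator measurableSet_Ioc,
    integral_indicator measurableSet_Ioc, intervalIntegral]

lemma integrable_orientedIndicator_smul_deriv (f : 𝓢(ℝ, F)) (x : ℝ) :
    Integrable fun t ↦ orientedIndicator t x • deriv f t :=
  (derivCLM ℝ F f).integrable.bdd_smul 1
    measurable_orientedIndicator.of_uncurry_right.aestronglyMeasurable
    (.of_forall fun t ↦ by simpa using abs_orientedIndicator_mul_le 0 t x)

lemma integral_orientedIndicator_smul_deriv [CompleteSpace F] (f : 𝓢(ℝ, F)) (x : ℝ) :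
    ∫ t, orientedIndicator t x • deriv f t = -f x := by
  rcases lt_or_ge 0 x with hx | hx
  · have h (t : ℝ) : orientedIndicator t x • deriv f t = (Ici x).indicator (deriv f) t := by
      by_cases ht : x ≤ t <;> simp [orientedIndicator, hx, hx.not_ge, ht]
    simp_rw [h]
    rw [integral_indicator measurableSet_Ici, integral_Ici_eq_integral_Ioi,
      integral_Ioi_deriv_schwartz]
  · have h (t : ℝ) : orientedIndicator t x • deriv f t = -(Iio x).indicator (deriv f) t := by
      by_cases ht : t < x <;> simp [orientedIndicator, hx, hx.not_gt, ht]
    simp_rw [h]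
    rw [integral_neg, integral_indicator measurableSet_Iio, ← integral_Iic_eq_integral_Iio,
      integral_Iic_deriv_schwartz]

variable {k : ℕ}

lemma locallyIntegrable_of_integrable_inv_smul
    (hv : Integrable fun x ↦ ((1 + x ^ 2) ^ k)⁻¹ • v x) : LocallyIntegrable v := by
  have hw : Continuous fun x : ℝ ↦ (1 + x ^ 2) ^ k := by fun_prop
  have hsmul (x : ℝ) : (1 + x ^ 2) ^ k • ((1 + x ^ 2) ^ k)⁻¹ • v x = v x :=
    smul_inv_smul₀ (by positivity) _
  simpa only [hsmul] using hv.locallyIntegrable.continuous_smul hw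

lemma intervalIntegrable_of_integrable_inv_smul
    (hv : Integrable fun x ↦ ((1 + x ^ 2) ^ k)⁻¹ • v x) (a b : ℝ) :
    IntervalIntegrable v volume a b :=
  ((locallyIntegrable_of_integrable_inv_smul hv).integrableOn_isCompact
    isCompact_uIcc).intervalIntegrable

lemma norm_orientedIndicator_smul_le (t x : ℝ) :
    ‖orientedIndicator t x • v x‖ ≤ (1 + t ^ 2) ^ k * ‖((1 + x ^ 2) ^ k)⁻¹ • v x‖ := by
  rw [norm_smul, norm_smul, Real.norm_eq_abs, norm_inv, Real.norm_of_nonneg (by positivity),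
    ← mul_assoc]
  gcongr
  exact (le_mul_inv_iff₀ (by positivity)).mpr (abs_orientedIndicator_mul_le k t x)

lemma norm_primitive_le (hv : Integrable fun x ↦ ((1 + x ^ 2) ^ k)⁻¹ • v x) (t : ℝ) :
    ‖∫ x in 0..t, v x‖ ≤ (∫ x, ‖((1 + x ^ 2) ^ k)⁻¹ • v x‖) * (1 + t ^ 2) ^ k := by
  rw [← integral_orientedIndicator_smul (intervalIntegrable_of_integrable_inv_smul hv 0 t),
    mul_comm, ← integral_const_mul]
  exact norm_integral_le_of_norm_le (hv.norm.const_mul _)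
    (.of_forall fun x ↦ norm_orientedIndicator_smul_le t x)

end Primitive

lemma exists_nat_mul_one_add_sq_pow_le {C : ℝ} (hC : 0 ≤ C) (M : ℕ) :
    ∃ k : ℕ, ∀ x : ℝ, C * (1 + x ^ 2) ^ M ≤ k + |x| ^ k := by
  obtain ⟨D, hD⟩ := exists_nat_ge (max 1 (C * 2 ^ M))
  obtain ⟨hD₁, hDC⟩ := max_le_iff.mp hD
  have hmax (x : ℝ) : C * (1 + x ^ 2) ^ M ≤ max (D : ℝ) |x| ^ (2 * M + 1) := by
    set r := max (D : ℝ) |x|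
    have hDr : (D : ℝ) ≤ r := le_max_left ..
    have hxr : x ^ 2 ≤ r ^ 2 := sq_le_sq.mpr ((le_max_right ..).trans (le_abs_self r))
    calc C * (1 + x ^ 2) ^ M ≤ C * (2 * r ^ 2) ^ M := by gcongr; nlinarith
      _ = C * 2 ^ M * r ^ (2 * M) := by ring
      _ ≤ r * r ^ (2 * M) := by gcongr; exact hDC.trans hDr
      _ = r ^ (2 * M + 1) := (pow_succ' r (2 * M)).symm
  refine ⟨D ^ (2 * M + 1) + (2 * M + 1), fun x ↦ (hmax x).trans ?_⟩
  push_cast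
  rcases le_total |x| D with hx | hx
  · rw [max_eq_left hx]
    have : 0 ≤ |x| ^ (D ^ (2 * M + 1) + (2 * M + 1)) := by positivity
    linarith
  · rw [max_eq_right hx]
    have : |x| ^ (2 * M + 1) ≤ |x| ^ (D ^ (2 * M + 1) + (2 * M + 1)) :=
      pow_le_pow_right₀ (hD₁.trans hx) (Nat.le_add_left ..)
    have : (0 : ℝ) ≤ D ^ (2 * M + 1) := by positivity
    linarith

section Main

variable {𝕜 E : Type*} [RCLike 𝕜] [NormedAddCommGroup E] [InnerProductSpace 𝕜 E] [NormedSpace ℝ E]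
  {v : ℝ → E} {k : ℕ}

lemma integrable_inner_orientedIndicator (hv : Integrable fun x ↦ ((1 + x ^ 2) ^ k)⁻¹ • v x)
    (f : 𝓢(ℝ, E)) :
    Integrable (Function.uncurry fun t x ↦ ⟪orientedIndicator t x • v x, deriv f t⟫_𝕜)
      (volume.prod volume) := by
  have hvmeas := (locallyIntegrable_of_integrable_inv_smul hv).aestronglyMeasurable
  refine ((integrable_one_add_sq_pow_mul_norm_deriv k f).mul_prod hv.norm).mono' ?_
    (.of_forall fun ⟨t, x⟩ ↦ ?_)
  · exact (measurable_orientedIndicator.aestronglyMeasurable.smul hvmeas.comp_snd).inner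
      ((derivCLM ℝ E f).continuous.comp continuous_fst).aestronglyMeasurable
  · calc ‖⟪orientedIndicator t x • v x, deriv f t⟫_𝕜‖
        ≤ ‖orientedIndicator t x • v x‖ * ‖deriv f t‖ := norm_inner_le_norm _ _
      _ ≤ (1 + t ^ 2) ^ k * ‖((1 + x ^ 2) ^ k)⁻¹ • v x‖ * ‖deriv f t‖ := by
          gcongr; exact norm_orientedIndicator_smul_le t x
      _ = _ := by ring

variable [CompleteSpace E]

lemma integral_inner_left {α : Type*} [MeasurableSpace α] {μ : Measure α} {g : α → E}
    (hg : Integrable g μ) (c : E) : ∫ x, ⟪g x, c⟫_𝕜 ∂μ = ⟪∫ x, g x ∂μ, c⟫_𝕜 := by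
  rw [← inner_conj_symm, ← integral_inner hg, ← integral_conj]
  simp_rw [inner_conj_symm]

lemma integral_inner_primitive_deriv (hv : Integrable fun x ↦ ((1 + x ^ 2) ^ k)⁻¹ • v x)
    (f : 𝓢(ℝ, E)) :
    ∫ t, ⟪∫ x in 0..t, v x, deriv f t⟫_𝕜 = -∫ x, ⟪v x, f x⟫_𝕜 := by
  have hloc := intervalIntegrable_of_integrable_inv_smul hv
  calc ∫ t, ⟪∫ x in 0..t, v x, deriv f t⟫_𝕜
      = ∫ t, ∫ x, ⟪orientedIndicator t x • v x, deriv f t⟫_𝕜 := by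
        refine integral_congr_ae (.of_forall fun t ↦ ?_)
        have hint := integrable_orientedIndicator_smul (hloc 0 t)
        simp only [integral_inner_left hint,
          integral_orientedIndicator_smul (hloc 0 t)]
    _ = ∫ x, ∫ t, ⟪orientedIndicator t x • v x, deriv f t⟫_𝕜 :=
        integral_integral_swap (integrable_inner_orientedIndicator hv f)
    _ = ∫ x, -⟪v x, f x⟫_𝕜 := by
        refine integral_congr_ae (.of_forall fun x ↦ ?_)
        simp only [inner_smul_left_eq_smul, ← inner_smul_right_eq_smul]
        rw [integral_inner (integrable_orientedIndicator_smul_deriv f x),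
          integral_orientedIndicator_smul_deriv, inner_neg_right]
    _ = -∫ x, ⟪v x, f x⟫_𝕜 := integral_neg _

theorem tempered_distribution_structure_general (T : 𝓢(ℝ, E) →L[𝕜] 𝕜) :
    ∃ (m : ℕ) (f : ℝ → E), Continuous f ∧ (∃ k : ℕ, ∀ x, ‖f x‖ ≤ k + |x| ^ k) ∧
      ∀ φ : 𝓢(ℝ, E), T φ = (-1) ^ m * ∫ x, ⟪f x, iteratedDeriv m φ x⟫_𝕜 := by
  obtain ⟨k, m, v, hv, hT⟩ := exists_eq_integral_inner_iteratedDeriv T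
  obtain ⟨K, hK⟩ := exists_nat_mul_one_add_sq_pow_le
    (integral_nonneg fun x ↦ norm_nonneg (((1 + x ^ 2) ^ k)⁻¹ • v x)) k
  refine ⟨m + 1, fun t ↦ (-1 : ℝ) ^ m • ∫ x in 0..t, v x, ?_, ⟨K, fun t ↦ ?_⟩, fun φ ↦ ?_⟩
  · exact (intervalIntegral.continuous_primitive
      (intervalIntegrable_of_integrable_inv_smul hv) 0).const_smul _
  · simpa [norm_smul] using (norm_primitive_le hv t).trans (hK t)
  · have hparts := integral_inner_primitive_deriv (𝕜 := 𝕜) hv ((derivCLM 𝕜 E ^ m) φ)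
    simp only [coe_derivCLM_pow, ← iteratedDeriv_succ] at hparts
    simp_rw [inner_smul_left_eq_smul, integral_smul, hparts, ← hT φ]
    rcases Nat.even_or_odd m with hm | hm <;> simp [pow_succ, hm.neg_one_pow]

end Main

/-- Schwartz structure theorem: every tempered distribution `T ∈ 𝒮'(ℝ)` is the `m`-th
distributional derivative of a continuous slowly increasing function `f`, i.e.
`⟨T, φ⟩ = (-1)^m ∫ f·φ^{(m)}` for all Schwartz functions `φ`. -/
theorem tempered_distribution_structure (T : SchwartzMap ℝ ℂ →L[ℂ] ℂ) :
    ∃ (m : ℕ) (f : ℝ → ℂ), Continuous f ∧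
      (∃ k : ℕ, ∀ x : ℝ, ‖f x‖ ≤ (k : ℝ) + |x| ^ k) ∧
      ∀ φ : SchwartzMap ℝ ℂ, T φ = (-1 : ℂ) ^ m * ∫ x : ℝ, f x * iteratedDeriv m (⇑φ) x := by
  obtain ⟨m, f, hf, hbound, hT⟩ := tempered_distribution_structure_general T
  exact ⟨m, star f, hf.star, by simpa using hbound, fun φ ↦ by simpa [mul_comm] using hT φ⟩
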